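/- arXiv:1805.04353 — 3 statements merged into one kernel-verified Lean document; each statement's English description precedes it below -/
import Mathlib

section
/- Let p ≥ 1 be an integer and let v₁ = (x₁,x₂,x₃,x₄), v₂ = (y₁,y₂,y₃,y₄), v₃ = (z₁,z₂,z₃,z₄) be a p-orthonormal system in ℤ⁴. Let t = (t₁,t₂,t₃,t₄) be the exterior product of v₁, v₂, v₃, where tᵢ = (−1)ⁱ times the 3×3 determinant of the matrix obtained from the 3×4 matrix with rows v₁, v₂, v₃ by deleting the i-th column. Then ⟨vᵢ|t⟩ = 0 for i = 1, 2, 3, and tᵢ² = p²(p − xᵢ² − yᵢ² − zᵢ²) for each 1 ≤ i ≤ 4; consequently p divides each tᵢ and N(t) = p³. -/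
/-!
Pairing `t` with a vector `w` gives, up to sign, the determinant of the square matrix obtained by
putting `w` on top of the rows `vᵢ`; it vanishes when `w` is one of the `vᵢ`. Deleting the `i`-th
column `c` from the matrix of the `vᵢ` changes its Gram matrix `p • 1` into the rank-one
perturbation `p • 1 - c cᵀ`, whose determinant `p ^ m * (p - c ⬝ᵥ c)`, for `m + 1` vectors, is
therefore `tᵢ ^ 2`. Summing over `i` gives the norm of `t`, and an integrally closed domain lets
one extract roots from the divisibility `p ^ m ∣ tᵢ ^ 2`.
-/

open Matrix

section CommRing

variable {R : Type*} [CommRing R]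

/-- The exterior product of the `n` rows of `A` in `R ^ (n + 1)`: the vector of signed maximal
minors. Columns are numbered from `0`, so the sign `(-1) ^ (i + 1)` is the usual one for columns
numbered from `1`. -/
def exteriorProduct {n : ℕ} (A : Matrix (Fin n) (Fin (n + 1)) R) : Fin (n + 1) → R :=
  fun i => (-1) ^ ((i : ℕ) + 1) * (A.submatrix id i.succAbove).det

theorem det_vecCons_eq_neg_dotProduct_exteriorProduct {n : ℕ} (w : Fin (n + 1) → R)
    (A : Matrix (Fin n) (Fin (n + 1)) R) :
    (of (vecCons w A)).det = -(w ⬝ᵥ exteriorProduct A) := by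
  rw [det_succ_row_zero, dotProduct, ← Finset.sum_neg_distrib]
  refine Finset.sum_congr rfl fun i _ => ?_
  have hminor : (of (vecCons w A)).submatrix Fin.succ i.succAbove = A.submatrix id i.succAbove :=
    rfl
  have htop : of (vecCons w A) 0 i = w i := rfl
  rw [hminor, htop, exteriorProduct]
  ring

theorem mulVec_exteriorProduct {n : ℕ} (A : Matrix (Fin n) (Fin (n + 1)) R) :
    A *ᵥ exteriorProduct A = 0 := by
  ext j
  have hdet : (of (vecCons (A j) A)).det = 0 := det_zero_of_row_eq (Fin.succ_ne_zero j).symm rfl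
  exact neg_eq_zero.mp ((det_vecCons_eq_neg_dotProduct_exteriorProduct _ A).symm.trans hdet)

theorem exteriorProduct_sq {n : ℕ} (A : Matrix (Fin n) (Fin (n + 1)) R) (i : Fin (n + 1)) :
    exteriorProduct A i ^ 2 =
      (A.submatrix id i.succAbove * (A.submatrix id i.succAbove)ᵀ).det := by
  rw [exteriorProduct, mul_pow, pow_right_comm, neg_one_sq, one_pow, one_mul, det_mul,
    det_transpose, sq]

theorem submatrix_succAbove_mul_transpose_self {ι : Type*} {n : ℕ}
    (A : Matrix ι (Fin (n + 1)) R) (i : Fin (n + 1)) :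
    A.submatrix id i.succAbove * (A.submatrix id i.succAbove)ᵀ =
      A * Aᵀ - vecMulVec (A.col i) (A.col i) := by
  rw [eq_sub_iff_add_eq']
  ext j k
  exact (Fin.sum_univ_succAbove (fun s => A j s * A k s) i).symm

theorem det_smul_one_sub_vecMulVec {ι : Type*} [Fintype ι] [DecidableEq ι] [Nonempty ι]
    (p : R) (u v : ι → R) :
    (p • (1 : Matrix ι ι R) - vecMulVec u v).det =
      p ^ (Fintype.card ι - 1) * (p - u ⬝ᵥ v) := by
  have hcard : p ^ Fintype.card ι = p ^ (Fintype.card ι - 1) * p :=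
    (pow_sub_one_mul Fintype.card_ne_zero p).symm
  rw [smul_one_eq_diagonal, ← scalar_apply, ← eval_charpoly, charpoly_vecMulVec]
  simp only [Polynomial.eval_sub, Polynomial.eval_smul, Polynomial.eval_pow, Polynomial.eval_X,
    smul_eq_mul, hcard]
  ring

theorem exteriorProduct_sq_of_mul_transpose_self {m : ℕ}
    {A : Matrix (Fin (m + 1)) (Fin (m + 2)) R} {p : R} (hA : A * Aᵀ = p • 1) (i : Fin (m + 2)) :
    exteriorProduct A i ^ 2 = p ^ m * (p - ∑ j, A j i ^ 2) := by
  rw [exteriorProduct_sq, submatrix_succAbove_mul_transpose_self, hA,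
    det_smul_one_sub_vecMulVec, Fintype.card_fin, Nat.add_sub_cancel]
  simp only [dotProduct, col_apply, sq]

theorem sum_sum_sq_of_mul_transpose_self {ι κ : Type*} [Fintype ι] [Fintype κ] [DecidableEq ι]
    {A : Matrix ι κ R} {p : R} (hA : A * Aᵀ = p • 1) :
    ∑ i, ∑ j, A j i ^ 2 = Fintype.card ι * p := by
  calc ∑ i, ∑ j, A j i ^ 2 = (A * Aᵀ).trace := by
        rw [Finset.sum_comm]
        simp only [trace, diag_apply, mul_apply, transpose_apply, sq]
    _ = Fintype.card ι * p := by rw [hA, trace_smul, trace_one, smul_eq_mul, mul_comm]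

theorem exteriorProduct_dotProduct_self {m : ℕ}
    {A : Matrix (Fin (m + 1)) (Fin (m + 2)) R} {p : R} (hA : A * Aᵀ = p • 1) :
    exteriorProduct A ⬝ᵥ exteriorProduct A = p ^ (m + 1) := by
  calc exteriorProduct A ⬝ᵥ exteriorProduct A
      = ∑ i, p ^ m * (p - ∑ j, A j i ^ 2) := by
        simp only [dotProduct, ← sq, exteriorProduct_sq_of_mul_transpose_self hA]
    _ = p ^ m * ((m + 2 : ℕ) * p - (m + 1 : ℕ) * p) := by
        rw [← Finset.mul_sum, Finset.sum_sub_distrib, sum_sum_sq_of_mul_transpose_self hA,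
          Fin.sum_const, nsmul_eq_mul, Fintype.card_fin]
    _ = p ^ (m + 1) := by
        push_cast
        ring

theorem of_three_rows_mul_transpose_self {κ : Type*} [Fintype κ] {v₁ v₂ v₃ : κ → R} {p : R}
    (h₁₁ : v₁ ⬝ᵥ v₁ = p) (h₂₂ : v₂ ⬝ᵥ v₂ = p) (h₃₃ : v₃ ⬝ᵥ v₃ = p)
    (h₁₂ : v₁ ⬝ᵥ v₂ = 0) (h₁₃ : v₁ ⬝ᵥ v₃ = 0) (h₂₃ : v₂ ⬝ᵥ v₃ = 0) :
    of ![v₁, v₂, v₃] * (of ![v₁, v₂, v₃])ᵀ = p • 1 := by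
  have h₂₁ : v₂ ⬝ᵥ v₁ = 0 := (dotProduct_comm _ _).trans h₁₂
  have h₃₁ : v₃ ⬝ᵥ v₁ = 0 := (dotProduct_comm _ _).trans h₁₃
  have h₃₂ : v₃ ⬝ᵥ v₂ = 0 := (dotProduct_comm _ _).trans h₂₃
  ext j k
  change ![v₁, v₂, v₃] j ⬝ᵥ ![v₁, v₂, v₃] k = _
  fin_cases j <;> fin_cases k <;> simp [h₁₁, h₂₂, h₃₃, h₁₂, h₁₃, h₂₃, h₂₁, h₃₁, h₃₂]

end CommRing

section IsIntegrallyClosed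

variable {R : Type*} [CommRing R] [IsDomain R] [IsIntegrallyClosed R]

theorem pow_half_dvd_of_pow_dvd_sq {p x : R} {m : ℕ} (h : p ^ m ∣ x ^ 2) : p ^ (m / 2) ∣ x := by
  rw [← IsIntegrallyClosed.pow_dvd_pow_iff two_ne_zero, ← pow_mul]
  exact (pow_dvd_pow p (Nat.div_mul_le_self m 2)).trans h

theorem exterior_product_properties_general {m : ℕ}
    (A : Matrix (Fin (m + 1)) (Fin (m + 2)) R) (p : R) (hA : A * Aᵀ = p • 1) :
    A *ᵥ exteriorProduct A = 0 ∧
    (∀ i, exteriorProduct A i ^ 2 = p ^ m * (p - ∑ j, A j i ^ 2)) ∧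
    (∀ i, p ^ (m / 2) ∣ exteriorProduct A i) ∧
    exteriorProduct A ⬝ᵥ exteriorProduct A = p ^ (m + 1) :=
  ⟨mulVec_exteriorProduct A, exteriorProduct_sq_of_mul_transpose_self hA,
    fun i => pow_half_dvd_of_pow_dvd_sq ⟨_, exteriorProduct_sq_of_mul_transpose_self hA i⟩,
    exteriorProduct_dotProduct_self hA⟩

end IsIntegrallyClosed

/-- The exterior product t of a three-vector p-orthonormal system v₁, v₂, v₃ in
ℤ⁴ (signed 3×3 minors of the 3×4 matrix with rows v₁, v₂, v₃, with sign (−1)ⁱ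
for the minor omitting column i) is orthogonal to each vᵢ, satisfies
tᵢ² = p²(p − x_i² − y_i² − z_i²), each tᵢ is divisible by p, and N(t) = p³. -/
theorem exterior_product_properties
    (p : ℤ) (hp : 1 ≤ p) (v₁ v₂ v₃ : Fin 4 → ℤ)
    (hn1 : ∑ t, v₁ t * v₁ t = p) (hn2 : ∑ t, v₂ t * v₂ t = p)
    (hn3 : ∑ t, v₃ t * v₃ t = p)
    (ho12 : ∑ t, v₁ t * v₂ t = 0) (ho13 : ∑ t, v₁ t * v₃ t = 0)
    (ho23 : ∑ t, v₂ t * v₃ t = 0)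
    (t : Fin 4 → ℤ)
    (ht : ∀ i : Fin 4, t i = (-1) ^ ((i : ℕ) + 1) *
      ((Matrix.of ![v₁, v₂, v₃]).submatrix id i.succAbove).det) :
    (∑ s, v₁ s * t s = 0) ∧ (∑ s, v₂ s * t s = 0) ∧ (∑ s, v₃ s * t s = 0) ∧
    (∀ i, t i ^ 2 = p ^ 2 * (p - v₁ i ^ 2 - v₂ i ^ 2 - v₃ i ^ 2)) ∧
    (∀ i, p ∣ t i) ∧ (∑ s, t s * t s = p ^ 3) := by
  obtain rfl : t = exteriorProduct (of ![v₁, v₂, v₃]) := funext ht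
  obtain ⟨horth, hsq, hdvd, hnorm⟩ := exterior_product_properties_general _ p
    (of_three_rows_mul_transpose_self hn1 hn2 hn3 ho12 ho13 ho23)
  exact ⟨congrFun horth 0, congrFun horth 1, congrFun horth 2,
    fun i => by simpa [Fin.sum_univ_three, sub_sub, add_assoc] using hsq i,
    by simpa using hdvd, hnorm⟩
end

section
/- Let p be a prime number, let S = {v₁, v₂} be a p-orthonormal system in ℤ⁴ with |supp(S)| > 2, and let {w₁, w₂} be a ℤ-basis of the orthogonal lattice Λ^⊥ = { v ∈ ℤ⁴ : ⟨v₁|v⟩ = ⟨v₂|v⟩ = 0 }. Then the determinant of the Gram matrix of {w₁, w₂} equals p², i.e. N(w₁)N(w₂) − ⟨w₁|w₂⟩² = p². -/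
/-!
Factor `V = A * X` with `A` square and `X` right invertible; the rows of `X` span the primitive
closure of the lattice spanned by the rows of `V`. Since `X` splits, its rows and a basis `W` of the
orthogonal lattice have the same Gram determinant over `ℤ`, so
`p ^ 2 = gramDet V = A.det ^ 2 * gramDet W`. Either `A.det = ±1`, or `gramDet X = 1`. In the latter
case `Xᵀ * (X * Xᵀ)⁻¹ * X` is an *integral* orthogonal projection of `ℤ^n`, hence diagonal with
entries `0` and `1`, and its trace bounds the size of the support of `V` by the number of rows.
-/

open Matrix Module

/-- The Gram determinant of the rows of a matrix, with respect to the dot product. -/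
def gramDet {κ ι R : Type*} [Fintype κ] [DecidableEq κ] [Fintype ι] [CommRing R]
    (V : Matrix κ ι R) : R :=
  (V * Vᵀ).det

/-- The support of a finite system of vectors, given as the rows of a matrix: the coordinates at
which some row is nonzero. -/
def rowsSupport {κ ι R : Type*} [Fintype κ] [Fintype ι] [Zero R] [DecidableEq R]
    (V : Matrix κ ι R) : Finset ι :=
  Finset.univ.filter fun i => ∃ k, V k i ≠ 0

/-- The matrix whose rows are the members of a basis of a submodule of `R^ι`. -/
noncomputable def basisRows {μ ι R : Type*} [CommRing R] {L : Submodule R (ι → R)}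
    (b : Basis μ R L) : Matrix μ ι R :=
  of fun i => (b i : ι → R)

section BasisRows

variable {κ μ ι R : Type*} [CommRing R]

theorem transpose_basisRows_mulVec [Fintype μ] {L : Submodule R (ι → R)} (b : Basis μ R L)
    (c : μ → R) : (basisRows b)ᵀ *ᵥ c = (b.equivFun.symm c : L) := by
  ext i
  simp [basisRows, mulVec, dotProduct, mul_comm]

theorem exists_basis_basisRows_eq [Fintype μ] {L : Submodule R (ι → R)} {w : μ → ι → R}
    (hw : ∀ i, w i ∈ L) (hcoord : ∀ u ∈ L, ∃! c : μ → R, u = ∑ i, c i • w i) :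
    ∃ b : Basis μ R L, basisRows b = of w := by
  classical
  let f : (μ → R) →ₗ[R] L := Fintype.linearCombination R fun i => (⟨w i, hw i⟩ : L)
  have hf : Function.Bijective f := by
    refine (Function.bijective_iff_existsUnique f).2 fun u => ?_
    simpa [f, Fintype.linearCombination_apply, Subtype.ext_iff, eq_comm] using hcoord u u.2
  refine ⟨.ofEquivFun (LinearEquiv.ofBijective f hf).symm, ?_⟩
  ext i
  simp [basisRows, f, Fintype.linearCombination_apply_single]

theorem exists_basis_basisRows_eq_pair {L : Submodule R (ι → R)} {w₁ w₂ : ι → R} (hw₁ : w₁ ∈ L)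
    (hw₂ : w₂ ∈ L) (hcoord : ∀ u ∈ L, ∃! ab : R × R, u = ab.1 • w₁ + ab.2 • w₂) :
    ∃ b : Basis (Fin 2) R L, basisRows b = of ![w₁, w₂] := by
  refine exists_basis_basisRows_eq (Fin.forall_fin_two.2 ⟨hw₁, hw₂⟩) fun u hu => ?_
  refine ((finTwoArrowEquiv R).existsUnique_congr fun {c} => ?_).2 (hcoord u hu)
  simp [Fin.sum_univ_two]

variable [Fintype ι]

theorem mem_ker_mulVecLin_pair (v w u : ι → R) :
    u ∈ LinearMap.ker (of ![v, w]).mulVecLin ↔ v ⬝ᵥ u = 0 ∧ w ⬝ᵥ u = 0 := by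
  simp [funext_iff, Fin.forall_fin_two]

theorem mul_transpose_basisRows {X : Matrix κ ι R}
    (b : Basis μ R (LinearMap.ker X.mulVecLin)) : X * (basisRows b)ᵀ = 0 := by
  ext k i
  exact congrFun (LinearMap.mem_ker.1 (b i).2) k

end BasisRows

section CommRing

variable {κ μ ι R : Type*} [Fintype κ] [DecidableEq κ] [Fintype ι] [CommRing R]

theorem gramDet_mul (A : Matrix κ κ R) (X : Matrix κ ι R) :
    gramDet (A * X) = A.det ^ 2 * gramDet X := by
  rw [gramDet, transpose_mul, Matrix.mul_assoc, ← Matrix.mul_assoc X, det_mul, det_mul,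
    det_transpose, gramDet]
  ring

theorem gramDet_pair (v w : ι → R) :
    gramDet (of ![v, w]) = (v ⬝ᵥ v) * (w ⬝ᵥ w) - (v ⬝ᵥ w) ^ 2 := by
  have hentry (i j : Fin 2) :
      (of ![v, w] * (of ![v, w])ᵀ) i j = (![v, w] i) ⬝ᵥ (![v, w] j) := rfl
  simp only [gramDet, det_fin_two, hentry, cons_val_zero, cons_val_one, dotProduct_comm w v]
  ring

theorem exists_det_mul_transpose_eq_units_sq [Nontrivial R] {S : Matrix κ ι R}
    {U : Matrix ι κ R} [DecidableEq ι] (hSU : S * U = 1) (hUS : U * S = 1) :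
    ∃ u : Rˣ, (S * Sᵀ).det = u ^ 2 := by
  let e : κ ≃ ι := Fintype.equivOfCardEq (square_of_invertible S U hSU hUS)
  have hunit : IsUnit (S.submatrix id e).det := by
    refine (isUnit_iff_isUnit_det _).1 (.of_mul_eq_one (U.submatrix e id) ?_)
    rw [submatrix_mul_equiv, hSU, submatrix_id_id]
  refine ⟨hunit.unit, ?_⟩
  have hsquare : S * Sᵀ = S.submatrix id e * (S.submatrix id e)ᵀ := by
    rw [transpose_submatrix, submatrix_mul_equiv, submatrix_id_id]
  rw [hsquare, det_mul, det_transpose, IsUnit.unit_spec, sq]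

theorem exists_mul_transpose_basisRows_eq_one [Fintype μ] [DecidableEq μ] [DecidableEq ι]
    {X : Matrix κ ι R} {Y : Matrix ι κ R} (hXY : X * Y = 1)
    (b : Basis μ R (LinearMap.ker X.mulVecLin)) :
    ∃ C : Matrix μ ι R, C * (basisRows b)ᵀ = 1 ∧ (basisRows b)ᵀ * C + Y * X = 1 := by
  have hproj (u : ι → R) : (1 - Y * X) *ᵥ u ∈ LinearMap.ker X.mulVecLin := by
    rw [LinearMap.mem_ker, mulVecLin_apply, mulVec_mulVec, Matrix.mul_sub, ← Matrix.mul_assoc,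
      hXY, Matrix.one_mul, Matrix.mul_one, sub_self, zero_mulVec]
  let q : (ι → R) →ₗ[R] LinearMap.ker X.mulVecLin := (1 - Y * X).mulVecLin.codRestrict _ hproj
  have hq (z : LinearMap.ker X.mulVecLin) : q z = z := by
    ext1
    simp [q]
  let C := LinearMap.toMatrix' (b.equivFun.toLinearMap ∘ₗ q)
  have hC (u : ι → R) : C *ᵥ u = b.equivFun (q u) := LinearMap.toMatrix'_mulVec _ u
  refine ⟨C, ext_iff_mulVec.2 fun c => ?_, ?_⟩
  · rw [← mulVec_mulVec, transpose_basisRows_mulVec, hC, hq, LinearEquiv.apply_symm_apply,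
      one_mulVec]
  · refine eq_sub_iff_add_eq.1 (ext_iff_mulVec.2 fun u => ?_)
    rw [← mulVec_mulVec, hC, transpose_basisRows_mulVec, LinearEquiv.symm_apply_apply]
    rfl

theorem exists_gramDet_eq_units_sq_mul_gramDet_basisRows [Nontrivial R] [Fintype μ] [DecidableEq μ]
    {X : Matrix κ ι R} {Y : Matrix ι κ R} (hXY : X * Y = 1)
    (b : Basis μ R (LinearMap.ker X.mulVecLin)) :
    ∃ u : Rˣ, gramDet X = u ^ 2 * gramDet (basisRows b) := by
  classical
  set W := basisRows b
  have hXW : X * Wᵀ = 0 := mul_transpose_basisRows b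
  obtain ⟨C, hCW, hsplit⟩ := exists_mul_transpose_basisRows_eq_one hXY b
  have hCY : C * Y = 0 := by
    have h : C * (Wᵀ * C + Y * X) * Y = C * Y := by rw [hsplit, Matrix.mul_one]
    rw [Matrix.mul_add, Matrix.add_mul, ← Matrix.mul_assoc, hCW, Matrix.one_mul,
      Matrix.mul_assoc C, Matrix.mul_assoc Y, hXY, Matrix.mul_one] at h
    exact add_eq_left.1 h
  -- `S` and `U` are mutually inverse, while `T * U` and `T * Sᵀ` are block triangular with
  -- determinants `gramDet W` and `gramDet X`.
  let S := fromRows C X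
  let T := fromRows W X
  let U := fromCols Wᵀ Y
  have hSU : S * U = 1 := by
    rw [fromRows_mul_fromCols, hCW, hCY, hXW, hXY, fromBlocks_one]
  have hUS : U * S = 1 := by rw [fromCols_mul_fromRows, hsplit]
  have hTS : (T * Sᵀ).det = gramDet X := by
    have hWC : W * Cᵀ = 1 := by simpa using congrArg transpose hCW
    have hWX : W * Xᵀ = 0 := by simpa using congrArg transpose hXW
    rw [transpose_fromRows, fromRows_mul_fromCols, hWC, hWX, det_fromBlocks_zero₁₂, det_one,
      one_mul, gramDet]
  have hTU : (T * U).det = gramDet W := by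
    rw [fromRows_mul_fromCols, hXW, hXY, det_fromBlocks_zero₂₁, det_one, mul_one, gramDet]
  obtain ⟨u, hu⟩ := exists_det_mul_transpose_eq_units_sq hSU hUS
  refine ⟨u, ?_⟩
  calc gramDet X = (T * (U * S) * Sᵀ).det := by rw [hUS, Matrix.mul_one, hTS]
    _ = (T * U * (S * Sᵀ)).det := by simp only [Matrix.mul_assoc]
    _ = u ^ 2 * gramDet W := by rw [det_mul, hTU, hu, mul_comm]

end CommRing

theorem exists_eq_mul_of_gramDet_ne_zero {κ ι R : Type*} [Fintype κ] [DecidableEq κ] [Fintype ι]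
    [CommRing R] [IsDomain R] [IsPrincipalIdealRing R]
    {V : Matrix κ ι R} (hV : gramDet V ≠ 0) :
    ∃ (A : Matrix κ κ R) (X : Matrix κ ι R) (Y : Matrix ι κ R), V = A * X ∧ X * Y = 1 := by
  classical
  have hle : LinearMap.range (V * Vᵀ).mulVecLin ≤ LinearMap.range V.mulVecLin := by
    rw [mulVecLin_mul]
    exact LinearMap.range_comp_le_range _ _
  have hrank : finrank R (LinearMap.range V.mulVecLin) = finrank R (κ → R) :=
    le_antisymm (Submodule.finrank_le _) <|
      (LinearMap.finrank_range_of_inj (mulVec_injective_of_det_ne_zero hV)).ge.trans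
        (Submodule.finrank_mono hle)
  let e := LinearEquiv.ofFinrankEq _ _ hrank
  let f : (ι → R) →ₗ[R] κ → R := e.toLinearMap ∘ₗ V.mulVecLin.rangeRestrict
  let g : (κ → R) →ₗ[R] κ → R := (LinearMap.range V.mulVecLin).subtype ∘ₗ e.symm.toLinearMap
  have hgf : g ∘ₗ f = V.mulVecLin := by
    ext
    simp [f, g]
  have hf : Function.Surjective (LinearMap.toMatrix' f).mulVec := by
    have : Function.Surjective f := e.surjective.comp V.mulVecLin.surjective_rangeRestrict
    simpa [Function.Surjective, LinearMap.toMatrix'_mulVec] using this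
  obtain ⟨Y, hY⟩ := mulVec_surjective_iff_exists_right_inverse.1 hf
  refine ⟨LinearMap.toMatrix' g, LinearMap.toMatrix' f, Y, ?_, hY⟩
  rw [← LinearMap.toMatrix'_comp, hgf]
  exact (LinearMap.toMatrix'_toLin' V).symm

theorem ker_mulVecLin_mul_of_det_ne_zero {κ ι R : Type*} [Fintype κ] [DecidableEq κ] [Fintype ι]
    [CommRing R] [IsDomain R] {A : Matrix κ κ R} (hA : A.det ≠ 0) (X : Matrix κ ι R) :
    LinearMap.ker (A * X).mulVecLin = LinearMap.ker X.mulVecLin := by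
  rw [mulVecLin_mul]
  exact LinearMap.ker_comp_of_ker_eq_bot _
    (LinearMap.ker_eq_bot.2 (mulVec_injective_of_det_ne_zero hA))

section SymmetricIdempotent

variable {ι R : Type*} [Fintype ι]

theorem diag_eq_sum_sq_of_isSymm_of_isIdempotentElem [Semiring R] {P : Matrix ι ι R}
    (hsymm : P.IsSymm) (hidem : IsIdempotentElem P) (i : ι) : P i i = ∑ j, P i j ^ 2 := by
  nth_rewrite 1 [← hidem.eq]
  simp only [mul_apply, sq, hsymm.apply]

theorem eq_zero_of_diag_eq_zero_of_isSymm_of_isIdempotentElem [Ring R] [LinearOrder R]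
    [IsStrictOrderedRing R] {P : Matrix ι ι R} (hsymm : P.IsSymm) (hidem : IsIdempotentElem P)
    {i : ι} (hi : P i i = 0) (j : ι) : P i j = 0 := by
  rw [diag_eq_sum_sq_of_isSymm_of_isIdempotentElem hsymm hidem,
    Finset.sum_eq_zero_iff_of_nonneg fun _ _ => sq_nonneg _] at hi
  exact pow_eq_zero_iff two_ne_zero |>.1 (hi j (Finset.mem_univ j))

theorem diag_eq_zero_or_one_of_isSymm_of_isIdempotentElem {P : Matrix ι ι ℤ} (hsymm : P.IsSymm)
    (hidem : IsIdempotentElem P) (i : ι) : P i i = 0 ∨ P i i = 1 := by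
  have hle : P i i ^ 2 ≤ P i i := by
    conv_rhs => rw [diag_eq_sum_sq_of_isSymm_of_isIdempotentElem hsymm hidem]
    exact Finset.single_le_sum (f := fun j => P i j ^ 2) (fun j _ => sq_nonneg _)
      (Finset.mem_univ i)
  have : 0 ≤ P i i := (sq_nonneg _).trans hle
  have : P i i ≤ 1 := by nlinarith
  omega

end SymmetricIdempotent

theorem rowsSupport_mul_subset {κ κ' ι R : Type*} [Fintype κ] [Fintype κ'] [Fintype ι]
    [NonUnitalNonAssocSemiring R] [DecidableEq R] (A : Matrix κ' κ R) (X : Matrix κ ι R) :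
    rowsSupport (A * X) ⊆ rowsSupport X := by
  intro i hi
  simp only [rowsSupport, Finset.mem_filter, Finset.mem_univ, true_and] at hi ⊢
  obtain ⟨k, hk⟩ := hi
  obtain ⟨j, -, hj⟩ := Finset.exists_ne_zero_of_sum_ne_zero hk
  exact ⟨j, right_ne_zero_of_mul hj⟩

section Int

variable {κ ι : Type*} [Fintype κ] [Fintype ι]

theorem card_rowsSupport_le_trace {P : Matrix ι ι ℤ} (hsymm : P.IsSymm)
    (hidem : IsIdempotentElem P) {X : Matrix κ ι ℤ} (hXP : X * P = X) :
    ((rowsSupport X).card : ℤ) ≤ P.trace := by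
  have hdiag := diag_eq_zero_or_one_of_isSymm_of_isIdempotentElem hsymm hidem
  have hone (i : ι) (hi : i ∈ rowsSupport X) : P i i = 1 := by
    obtain ⟨k, hk⟩ := (Finset.mem_filter.1 hi).2
    refine (hdiag i).resolve_left fun hi0 => hk ?_
    rw [← hXP, mul_apply]
    exact Finset.sum_eq_zero fun j _ => by
      rw [← hsymm.apply, eq_zero_of_diag_eq_zero_of_isSymm_of_isIdempotentElem hsymm hidem hi0,
        mul_zero]
  calc ((rowsSupport X).card : ℤ) = ∑ i ∈ rowsSupport X, P i i := by
        simp [Finset.sum_congr rfl hone]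
    _ ≤ P.trace := Finset.sum_le_univ_sum_of_nonneg fun i => by
        rcases hdiag i with h | h <;> simp [h]

theorem card_rowsSupport_le_of_isUnit_gramDet [DecidableEq κ] {X : Matrix κ ι ℤ}
    (hX : IsUnit (gramDet X)) : (rowsSupport X).card ≤ Fintype.card κ := by
  set G := X * Xᵀ with hG
  have hGG : G * G⁻¹ = 1 := mul_nonsing_inv G hX
  have hXP : X * (Xᵀ * G⁻¹ * X) = X := by
    rw [← Matrix.mul_assoc, ← Matrix.mul_assoc, ← hG, hGG, Matrix.one_mul]
  have hsymm : (Xᵀ * G⁻¹ * X).IsSymm := by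
    rw [IsSymm, transpose_mul, transpose_mul, transpose_transpose, transpose_nonsing_inv, hG,
      transpose_mul, transpose_transpose, Matrix.mul_assoc]
  have hidem : IsIdempotentElem (Xᵀ * G⁻¹ * X) := by
    rw [IsIdempotentElem, Matrix.mul_assoc (Xᵀ * G⁻¹), hXP]
  have htrace : (Xᵀ * G⁻¹ * X).trace = Fintype.card κ := by
    rw [Matrix.mul_assoc, trace_mul_comm, Matrix.mul_assoc, ← hG, nonsing_inv_mul G hX, trace_one]
  exact_mod_cast htrace ▸ card_rowsSupport_le_trace hsymm hidem hXP

theorem gramDet_eq_gramDet_basisRows_of_mul_eq_one [DecidableEq κ] {μ : Type*} [Fintype μ]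
    [DecidableEq μ] {X : Matrix κ ι ℤ} {Y : Matrix ι κ ℤ} (hXY : X * Y = 1)
    {L : Submodule ℤ (ι → ℤ)} (hL : L = LinearMap.ker X.mulVecLin) (b : Basis μ ℤ L) :
    gramDet X = gramDet (basisRows b) := by
  subst hL
  obtain ⟨u, hu⟩ := exists_gramDet_eq_units_sq_mul_gramDet_basisRows hXY b
  rw [hu, Int.isUnit_sq u.isUnit, one_mul]

theorem gram_det_eq_p_sq_general [DecidableEq κ] {μ : Type*} [Fintype μ] [DecidableEq μ] {p : ℤ}
    (hp : Prime p) {V : Matrix κ ι ℤ} (hV : gramDet V = p ^ 2)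
    (hsupp : Fintype.card κ < (rowsSupport V).card)
    (b : Basis μ ℤ (LinearMap.ker V.mulVecLin)) :
    gramDet (basisRows b) = p ^ 2 := by
  have hp2 : p ^ 2 ≠ 0 := pow_ne_zero 2 hp.ne_zero
  obtain ⟨A, X, Y, rfl, hXY⟩ := exists_eq_mul_of_gramDet_ne_zero (hV ▸ hp2)
  have hA : A.det ^ 2 * gramDet X = p ^ 2 := by rw [← gramDet_mul, hV]
  have hA0 : A.det ≠ 0 := fun h => hp2 (by rw [← hA, h]; ring)
  rw [← gramDet_eq_gramDet_basisRows_of_mul_eq_one hXY (ker_mulVecLin_mul_of_det_ne_zero hA0 X)]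
  have hdvd : A.det ∣ p := (Int.pow_dvd_pow_iff two_ne_zero).1 ⟨_, hA.symm⟩
  rcases hp.irreducible.dvd_iff.1 hdvd with hunit | hassoc
  · rwa [Int.isUnit_sq hunit, one_mul] at hA
  · have hsq : p ^ 2 = A.det ^ 2 := Int.natAbs_eq_iff_sq_eq.1 (Int.associated_iff_natAbs.1 hassoc)
    have hX : gramDet X = 1 := mul_left_cancel₀ hp2 (by linear_combination hA + gramDet X * hsq)
    have hcard : (rowsSupport (A * X)).card ≤ Fintype.card κ :=
      (Finset.card_le_card (rowsSupport_mul_subset A X)).trans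
        (card_rowsSupport_le_of_isUnit_gramDet (hX ▸ isUnit_one))
    exact absurd hcard hsupp.not_ge

end Int

/-- For a two-vector p-orthonormal system in ℤ⁴ (p prime) with support of size
greater than 2, the Gram determinant of any ℤ-basis {w₁, w₂} of the orthogonal
lattice equals p². -/
theorem gram_det_eq_p_sq
    (p : ℕ) (hp : p.Prime) (v₁ v₂ : Fin 4 → ℤ)
    (hn1 : ∑ t, v₁ t * v₁ t = (p : ℤ)) (hn2 : ∑ t, v₂ t * v₂ t = (p : ℤ))
    (ho : ∑ t, v₁ t * v₂ t = 0)
    (hsupp : 2 < (Finset.univ.filter (fun i : Fin 4 => v₁ i ≠ 0 ∨ v₂ i ≠ 0)).card)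
    (w₁ w₂ : Fin 4 → ℤ)
    (hw₁ : (∑ t, v₁ t * w₁ t = 0) ∧ (∑ t, v₂ t * w₁ t = 0))
    (hw₂ : (∑ t, v₁ t * w₂ t = 0) ∧ (∑ t, v₂ t * w₂ t = 0))
    (hbasis : ∀ u : Fin 4 → ℤ,
      ((∑ t, v₁ t * u t = 0) ∧ (∑ t, v₂ t * u t = 0)) →
      ∃! ab : ℤ × ℤ, u = ab.1 • w₁ + ab.2 • w₂) :
    (∑ t, w₁ t * w₁ t) * (∑ t, w₂ t * w₂ t) - (∑ t, w₁ t * w₂ t) ^ 2 = (p : ℤ) ^ 2 := by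
  have hV : gramDet (of ![v₁, v₂]) = (p : ℤ) ^ 2 := by
    simp only [gramDet_pair, dotProduct, hn1, hn2, ho]
    ring
  have hcard : Fintype.card (Fin 2) < (rowsSupport (of ![v₁, v₂])).card := by
    simpa [rowsSupport, Fin.exists_fin_two] using hsupp
  obtain ⟨b, hb⟩ := exists_basis_basisRows_eq_pair ((mem_ker_mulVecLin_pair v₁ v₂ w₁).2 hw₁)
    ((mem_ker_mulVecLin_pair v₁ v₂ w₂).2 hw₂)
    fun u hu => hbasis u ((mem_ker_mulVecLin_pair v₁ v₂ u).1 hu)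
  have hW := gram_det_eq_p_sq_general (Nat.prime_iff_prime_int.1 hp) hV hcard b
  rwa [hb, gramDet_pair] at hW
end

section
/- Let p be a prime number and let S = {v₁, v₂} be a p-orthonormal system in ℤ⁴ with |supp(S)| > 2. Then there exists v₃ ∈ ℤ⁴ such that ⟨v₁|v₃⟩ = 0, ⟨v₂|v₃⟩ = 0 and N(v₃) = p. -/
/-!
Put `ζ = v₁ + i v₂ ∈ ℤ[i]⁴`: the vectors `v₁`, `v₂` are orthogonal of equal norm exactly when
`∑ ζ_k² = 0`. Reading `ζ` as a complexified quaternion turns `∑ ζ_k²` into the determinant of a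
`2 × 2` matrix over `ℤ[i]`, so that `ζ` corresponds to a matrix of rank at most one, which factors
as `s tᵀ` over the unique factorization domain `ℤ[i]`. Replacing `t` by its quaternionic conjugate
`(-t̄₁, t̄₀)` yields another isotropic vector `η` with the same Hermitian norm, orthogonal to both
`ζ` and its conjugate; it has coordinates in `ℤ[i]` because `t̄ ≡ t` modulo `2`. The real and
imaginary parts of `η` extend `v₁`, `v₂` to an orthogonal system of vectors of equal norm.
-/

open Matrix

section Complexification

variable {ι : Type*}

/-- The vector `v + i w` with Gaussian integer coordinates; it encodes a pair of integer vectors,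
orthogonal and of equal norm exactly when `v + i w` is isotropic. -/
def gaussianVec (v w : ι → ℤ) : ι → GaussianInt := fun k => ⟨v k, w k⟩

lemma star_gaussianVec (v w : ι → ℤ) : star (gaussianVec v w) = gaussianVec v (-w) := rfl

lemma exists_eq_gaussianVec (ζ : ι → GaussianInt) : ∃ v w, ζ = gaussianVec v w :=
  ⟨fun k => (ζ k).re, fun k => (ζ k).im, rfl⟩

lemma gaussianVec_dotProduct_gaussianVec [Fintype ι] (v w v' w' : ι → ℤ) :
    gaussianVec v w ⬝ᵥ gaussianVec v' w' = ⟨v ⬝ᵥ v' - w ⬝ᵥ w', v ⬝ᵥ w' + w ⬝ᵥ v'⟩ := by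
  ext
  · refine (map_sum (AddMonoidHom.mk' Zsqrtd.re Zsqrtd.re_add) _ _).trans ?_
    simp [gaussianVec, dotProduct, sub_eq_add_neg, Finset.sum_add_distrib]
  · refine (map_sum (AddMonoidHom.mk' Zsqrtd.im Zsqrtd.im_add) _ _).trans ?_
    simp [gaussianVec, dotProduct, Finset.sum_add_distrib]

end Complexification

lemma two_dvd_sub_star (z : GaussianInt) : 2 ∣ z - star z :=
  ⟨⟨0, z.im⟩, by ext <;> simp [two_mul]⟩

/-- Euler's four number theorem. -/
lemma exists_eq_mul_of_mul_eq_mul {M : Type*} [CommMonoidWithZero M] [IsCancelMulZero M]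
    [DecompositionMonoid M] {a b c d : M} (h : a * d = b * c) :
    ∃ s₀ s₁ t₀ t₁, a = s₀ * t₀ ∧ b = s₀ * t₁ ∧ c = s₁ * t₀ ∧ d = s₁ * t₁ := by
  rcases eq_or_ne a 0 with rfl | ha
  · rcases mul_eq_zero.mp ((zero_mul d).symm.trans h).symm with rfl | rfl
    · exact ⟨0, 1, c, d, by simp⟩
    · exact ⟨b, d, 0, 1, by simp⟩
  · obtain ⟨s₀, t₀, ⟨t₁, rfl⟩, ⟨s₁, rfl⟩, rfl⟩ := exists_dvd_and_dvd_of_dvd_mul (Dvd.intro d h)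
    refine ⟨s₀, s₁, t₀, t₁, rfl, rfl, mul_comm _ _, mul_left_cancel₀ ha ?_⟩
    rw [h]
    ac_rfl

lemma exists_eq_vecMulVec_of_det_eq_zero {R : Type*} [CommRing R] [IsDomain R]
    [DecompositionMonoid R] {A : Matrix (Fin 2) (Fin 2) R} (hA : A.det = 0) :
    ∃ s t, A = vecMulVec s t := by
  rw [det_fin_two, sub_eq_zero] at hA
  obtain ⟨s₀, s₁, t₀, t₁, h₀₀, h₀₁, h₁₀, h₁₁⟩ := exists_eq_mul_of_mul_eq_mul hA
  refine ⟨![s₀, s₁], ![t₀, t₁], ?_⟩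
  ext i j
  fin_cases i <;> fin_cases j <;> simpa [vecMulVec_apply]

section Spinor

variable {R : Type*} [CommRing R]

lemma trace_vecMulVec_mul_adjugate_vecMulVec (s t s' t' : Fin 2 → R) :
    (vecMulVec s t * (vecMulVec s' t').adjugate).trace
      = (of ![s, s']).det * (of ![t, t']).det := by
  simp only [adjugate_fin_two, trace_fin_two, mul_apply, Fin.sum_univ_two, vecMulVec_apply,
    det_fin_two, of_apply, cons_val', cons_val_zero, cons_val_one, cons_val_fin_one]
  ring

variable [StarRing R]

/-- The quaternionic structure map `(t₀, t₁) ↦ (-t̄₁, t̄₀)`, which turns one factor of a rank-one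
matrix into the corresponding factor of the conjugate quaternion. -/
def spinorConj (t : Fin 2 → R) : Fin 2 → R := ![-star (t 1), star (t 0)]

lemma det_spinorConj_spinorConj (t : Fin 2 → R) :
    (of ![spinorConj (spinorConj t), spinorConj t]).det = (of ![spinorConj t, t]).det := by
  simp only [det_fin_two, spinorConj, of_apply, cons_val', cons_val_zero, cons_val_one,
    cons_val_fin_one, star_neg, star_star]
  ring

lemma conjTranspose_adjugate_vecMulVec (s t : Fin 2 → R) :
    (vecMulVec s t).adjugateᴴ = vecMulVec (spinorConj s) (spinorConj t) := by
  ext1 j k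
  fin_cases j <;> fin_cases k <;> simp [adjugate_fin_two, vecMulVec_apply, spinorConj, mul_comm]

end Spinor

section QuaternionMatrix

local notation "I" => (Zsqrtd.sqrtd : GaussianInt)

lemma I_mul_I : I * I = -1 := Zsqrtd.dmuld

/-- The `2 × 2` matrix representing the quaternion `ζ₀ + ζ₁ i + ζ₂ j + ζ₃ k` with coordinates in
`ℤ[i]`; its determinant is the complexified quaternion norm. -/
def quaternionMatrix (ζ : Fin 4 → GaussianInt) : Matrix (Fin 2) (Fin 2) GaussianInt :=
  !![ζ 0 + I * ζ 1, ζ 2 + I * ζ 3; -ζ 2 + I * ζ 3, ζ 0 - I * ζ 1]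

lemma exists_quaternionMatrix_eq {A : Matrix (Fin 2) (Fin 2) GaussianInt}
    (hdiag : 2 ∣ A 0 0 - A 1 1) (hanti : 2 ∣ A 0 1 - A 1 0) : ∃ ζ, quaternionMatrix ζ = A := by
  obtain ⟨x, hx⟩ := hdiag
  obtain ⟨y, hy⟩ := hanti
  refine ⟨![A 1 1 + x, -I * x, y, -I * (A 1 0 + y)], ?_⟩
  ext1 j k
  fin_cases j <;> fin_cases k <;>
    simp only [quaternionMatrix, of_apply, cons_val', cons_val, cons_val_zero, cons_val_one,
      cons_val_fin_one, Fin.zero_eta, Fin.mk_one]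
  · linear_combination -hx - x * I_mul_I
  · linear_combination -hy - (A 1 0 + y) * I_mul_I
  · linear_combination -(A 1 0 + y) * I_mul_I
  · linear_combination x * I_mul_I

lemma det_quaternionMatrix (ζ : Fin 4 → GaussianInt) : (quaternionMatrix ζ).det = ζ ⬝ᵥ ζ := by
  simp only [quaternionMatrix, det_fin_two_of, dotProduct, Fin.sum_univ_four]
  linear_combination (-ζ 1 ^ 2 - ζ 3 ^ 2) * I_mul_I

lemma trace_quaternionMatrix_mul_adjugate (ζ η : Fin 4 → GaussianInt) :
    (quaternionMatrix ζ * (quaternionMatrix η).adjugate).trace = 2 * (ζ ⬝ᵥ η) := by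
  simp only [quaternionMatrix, adjugate_fin_two_of, mul_fin_two, trace_fin_two_of, dotProduct,
    Fin.sum_univ_four]
  linear_combination (-2 * ζ 1 * η 1 - 2 * ζ 3 * η 3) * I_mul_I

lemma quaternionMatrix_star (ζ : Fin 4 → GaussianInt) :
    quaternionMatrix (star ζ) = (quaternionMatrix ζ).adjugateᴴ := by
  have star_I : star I = -I := rfl
  ext1 j k
  fin_cases j <;> fin_cases k <;>
    simp only [quaternionMatrix, adjugate_fin_two_of, conjTranspose_apply, of_apply, cons_val',
      cons_val_zero, cons_val_one, cons_val_fin_one, Fin.zero_eta, Fin.mk_one, Pi.star_apply,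
      star_add, star_sub, star_neg, star_mul', star_I] <;>
    ring

variable {ζ η : Fin 4 → GaussianInt} {s t s' t' : Fin 2 → GaussianInt}

lemma two_mul_dotProduct_eq_det_mul_det (hζ : quaternionMatrix ζ = vecMulVec s t)
    (hη : quaternionMatrix η = vecMulVec s' t') :
    2 * (ζ ⬝ᵥ η) = (of ![s, s']).det * (of ![t, t']).det := by
  rw [← trace_quaternionMatrix_mul_adjugate, hζ, hη, trace_vecMulVec_mul_adjugate_vecMulVec]

lemma two_mul_star_dotProduct_eq_det_mul_det (hζ : quaternionMatrix ζ = vecMulVec s t)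
    (hη : quaternionMatrix η = vecMulVec s' t') :
    2 * (star ζ ⬝ᵥ η) = (of ![spinorConj s, s']).det * (of ![spinorConj t, t']).det :=
  two_mul_dotProduct_eq_det_mul_det
    (by rw [quaternionMatrix_star, hζ, conjTranspose_adjugate_vecMulVec]) hη

lemma exists_quaternionMatrix_eq_vecMulVec_spinorConj (hζ : quaternionMatrix ζ = vecMulVec s t) :
    ∃ η, quaternionMatrix η = vecMulVec s (spinorConj t) := by
  have hanti : s 0 * t 1 + s 1 * t 0 = 2 * (I * ζ 3) := by
    have h₀₁ : ζ 2 + I * ζ 3 = s 0 * t 1 := congr_fun₂ hζ 0 1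
    have h₁₀ : -ζ 2 + I * ζ 3 = s 1 * t 0 := congr_fun₂ hζ 1 0
    linear_combination -h₀₁ - h₁₀
  have hdiag : s 0 * t 0 + s 1 * t 1 = 2 * ζ 0 := by
    have h₀₀ : ζ 0 + I * ζ 1 = s 0 * t 0 := congr_fun₂ hζ 0 0
    have h₁₁ : ζ 0 - I * ζ 1 = s 1 * t 1 := congr_fun₂ hζ 1 1
    linear_combination -h₀₀ - h₁₁
  obtain ⟨u, hu⟩ := two_dvd_sub_star (t 0)
  obtain ⟨v, hv⟩ := two_dvd_sub_star (t 1)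
  apply exists_quaternionMatrix_eq
  · refine ⟨s 0 * v + s 1 * u - I * ζ 3, ?_⟩
    simp only [vecMulVec_apply, spinorConj, cons_val_zero, cons_val_one]
    linear_combination s 0 * hv + s 1 * hu - hanti
  · refine ⟨ζ 0 - s 0 * u - s 1 * v, ?_⟩
    simp only [vecMulVec_apply, spinorConj, cons_val_zero, cons_val_one]
    linear_combination hdiag - s 0 * hu - s 1 * hv

lemma exists_isotropic_orthogonal {ζ : Fin 4 → GaussianInt} (hζ : ζ ⬝ᵥ ζ = 0) :
    ∃ η : Fin 4 → GaussianInt, η ⬝ᵥ η = 0 ∧ ζ ⬝ᵥ η = 0 ∧ star ζ ⬝ᵥ η = 0 ∧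
      star η ⬝ᵥ η = star ζ ⬝ᵥ ζ := by
  obtain ⟨s, t, hst⟩ := exists_eq_vecMulVec_of_det_eq_zero ((det_quaternionMatrix ζ).trans hζ)
  obtain ⟨η, hη⟩ := exists_quaternionMatrix_eq_vecMulVec_spinorConj hst
  have hself (u : Fin 2 → GaussianInt) : (of ![u, u]).det = 0 :=
    det_zero_of_row_eq zero_ne_one rfl
  refine ⟨η, ?_, ?_, ?_, ?_⟩ <;> apply mul_left_cancel₀ (two_ne_zero' GaussianInt)
  · rw [two_mul_dotProduct_eq_det_mul_det hη hη, hself, zero_mul, mul_zero]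
  · rw [two_mul_dotProduct_eq_det_mul_det hst hη, hself, zero_mul, mul_zero]
  · rw [two_mul_star_dotProduct_eq_det_mul_det hst hη, hself, mul_zero, mul_zero]
  · rw [two_mul_star_dotProduct_eq_det_mul_det hη hη,
      two_mul_star_dotProduct_eq_det_mul_det hst hst, det_spinorConj_spinorConj]

end QuaternionMatrix

theorem two_vector_extension_general (n : ℤ) (v₁ v₂ : Fin 4 → ℤ)
    (hn₁ : v₁ ⬝ᵥ v₁ = n) (hn₂ : v₂ ⬝ᵥ v₂ = n) (ho : v₁ ⬝ᵥ v₂ = 0) :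
    ∃ v₃ v₄ : Fin 4 → ℤ, (v₁ ⬝ᵥ v₃ = 0 ∧ v₂ ⬝ᵥ v₃ = 0 ∧ v₃ ⬝ᵥ v₃ = n) ∧
      v₁ ⬝ᵥ v₄ = 0 ∧ v₂ ⬝ᵥ v₄ = 0 ∧ v₃ ⬝ᵥ v₄ = 0 ∧ v₄ ⬝ᵥ v₄ = n := by
  have hζ : gaussianVec v₁ v₂ ⬝ᵥ gaussianVec v₁ v₂ = 0 := by
    rw [gaussianVec_dotProduct_gaussianVec, dotProduct_comm v₂ v₁, hn₁, hn₂, ho, sub_self, add_zero]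
    rfl
  obtain ⟨η, hη, hort, hort', hnorm⟩ := exists_isotropic_orthogonal hζ
  obtain ⟨v₃, v₄, rfl⟩ := exists_eq_gaussianVec η
  simp only [star_gaussianVec, gaussianVec_dotProduct_gaussianVec, Zsqrtd.ext_iff, neg_dotProduct,
    dotProduct_comm v₄ v₃, hn₁, hn₂, Zsqrtd.re_zero, Zsqrtd.im_zero] at hη hort hort' hnorm
  refine ⟨v₃, v₄, ?_⟩
  omega

/-- A two-vector p-orthonormal system in ℤ⁴ (p prime) with support of size
greater than 2 admits a third orthogonal vector of norm p. -/
theorem two_vector_extension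
    (p : ℕ) (hp : p.Prime) (v₁ v₂ : Fin 4 → ℤ)
    (hn1 : ∑ t, v₁ t * v₁ t = (p : ℤ)) (hn2 : ∑ t, v₂ t * v₂ t = (p : ℤ))
    (ho : ∑ t, v₁ t * v₂ t = 0)
    (hsupp : 2 < (Finset.univ.filter (fun i : Fin 4 => v₁ i ≠ 0 ∨ v₂ i ≠ 0)).card) :
    ∃ v₃ : Fin 4 → ℤ, (∑ t, v₁ t * v₃ t = 0) ∧ (∑ t, v₂ t * v₃ t = 0) ∧
      ∑ t, v₃ t * v₃ t = (p : ℤ) := by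
  obtain ⟨v₃, _, hv₃, _⟩ := two_vector_extension_general p v₁ v₂ hn1 hn2 ho
  exact ⟨v₃, hv₃⟩
end
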